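/- Define 2×2 rational matrices m_a = (1/35)[[1,−6],[6,−1]], m_b = (1/35)[[12,−2],[2,−12]], m_d = (1/35)[[12,−2],[2,−12]], m_s = (1/35)[[−6,1],[−1,6]], m_t = (1/35)[[6,−1],[1,−6]], m_e = (1/35)[[−1,6],[−6,1]]. Let M_ρ be the 64×64 rational matrix, with rows and columns indexed by P¹(F₃₁) (two rows and two columns per index), whose 2×2 block in position (μ,ν) is: m_a if μ = ∞ and ν ≠ ∞; m_b if μ = ν = ∞; m_d if μ = ν ≠ ∞; m_s if μ,ν ∈ F₃₁, μ ≠ ν, χ(μ−ν) = 1; m_t if μ,ν ∈ F₃₁, μ ≠ ν, χ(μ−ν) = −1; m_e if μ ≠ ∞ and ν = ∞. Then L_Q equals the ℤ-submodule of ℚ⁶⁴ generated by the 64 standard basis vectors of ℤ⁶⁴ together with the 64 rows of M_ρ. -/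

import Mathlib

/-!
Modulo `R`, a vector `(p, q)/35` of `R∨` is `-p • u`, provided `q ≡ -6 p (mod 35)`.  Read blockwise,
the first row of `M_ρ` indexed by `μ` therefore projects to the word `wrow μ` of `(ℤ/35ℤ)^{P¹}`, and
the second one to `6 • wrow μ`.  Since `ℤ⁶⁴` is the kernel of the projection, the statement says
that the words `wrow μ` generate `Q`, which follows from three identities modulo 35:

* `wrow ∞ = 19 ∑ v_μ`: each finite `ν` sees `15` squares and `15` non-squares, so the sum of the
  `v_μ` is `1 + 15·7 + 15·3 = 11` at `ν`, and it is `62 = 27` at `∞`;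
* `v_μ = 12 wrow μ - 5 wrow ∞`;
* `wrow μ = 3 v_μ + 15 wrow ∞`, the inverse of the previous one.

The relation that `x` projects to `w` is encoded as a subgroup `liftRel` of the product group, so that
it can be transported through `AddSubgroup.closure_induction`.
-/

noncomputable section

/-- The projective line over `F₃₁`: `none` is the point `∞`. -/
abbrev P1 : Type := Option (ZMod 31)

/-- The generator `v_μ` of the generalized quadratic residue code `Q` with
parameters `(a,b,d,s,t,e) = (0,0,1,7,3,2)`:
`v_μ(μ) = 1`, `v_μ(ν) = 7` if `χ(μ-ν) = 1`, `v_μ(ν) = 3` if `χ(μ-ν) = -1`, `v_μ(∞) = 2`. -/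
def vgen (μ : ZMod 31) : P1 → ZMod 35 := fun ν =>
  match ν with
  | none => 2
  | some ν' => if ν' = μ then 1 else if IsSquare (μ - ν') then 7 else 3

/-- The generalized quadratic residue code `Q`, a subgroup of `(ℤ/35ℤ)^{P¹(F₃₁)}`. -/
def Qcode : AddSubgroup (P1 → ZMod 35) := AddSubgroup.closure (Set.range vgen)
/-- The generator `u = (34 e₁ + 6 e₂)/35` of the discriminant group `D_R = R∨/R ≅ ℤ/35ℤ`. -/
def uvec : Fin 2 → ℚ := ![34/35, 6/35]

/-- The bilinear form `⟨x,y⟩ = xᵀ G y` on `ℚ²`, with `G = [[6,1],[1,6]]`. -/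
def B2 (x y : Fin 2 → ℚ) : ℚ :=
  6 * x 0 * y 0 + x 0 * y 1 + x 1 * y 0 + 6 * x 1 * y 1

/-- Membership in the lattice `R = ℤ² ⊆ ℚ²`. -/
def inRlat (x : Fin 2 → ℚ) : Prop := ∀ i, ∃ k : ℤ, x i = (k : ℚ)
/-- The lattice `L_Q ⊆ (R∨)³² ⊆ ℚ⁶⁴`: the preimage of the code `Q` under the natural
projection `(R∨)³² → (D_R)³² ≅ (ℤ/35ℤ)³²`.  A vector `x` belongs to `L_Q` iff there is a
codeword `w ∈ Q` such that for every `ν ∈ P¹(F₃₁)` the component `x ν` is congruent to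
`w(ν)·u` modulo `R = ℤ²`. -/
def LQ : Set (P1 → Fin 2 → ℚ) :=
  {x | ∃ w ∈ Qcode, ∀ ν : P1, ∃ m : ℤ,
    (m : ZMod 35) = w ν ∧ inRlat (x ν - (m : ℚ) • uvec)}

/-- The orthogonal direct-sum bilinear form of 32 copies of `R∨`. -/
def Bf (x y : P1 → Fin 2 → ℚ) : ℚ := ∑ ν : P1, B2 (x ν) (y ν)

/-- `m_a = (1/35)·[[1,-6],[6,-1]]`. -/
def mA : Matrix (Fin 2) (Fin 2) ℚ := (1 / 35 : ℚ) • !![1, -6; 6, -1]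

/-- `m_b = (1/35)·[[12,-2],[2,-12]]`. -/
def mB : Matrix (Fin 2) (Fin 2) ℚ := (1 / 35 : ℚ) • !![12, -2; 2, -12]

/-- `m_d = (1/35)·[[12,-2],[2,-12]]`. -/
def mD : Matrix (Fin 2) (Fin 2) ℚ := (1 / 35 : ℚ) • !![12, -2; 2, -12]

/-- `m_s = (1/35)·[[-6,1],[-1,6]]`. -/
def mS : Matrix (Fin 2) (Fin 2) ℚ := (1 / 35 : ℚ) • !![-6, 1; -1, 6]

/-- `m_t = (1/35)·[[6,-1],[1,-6]]`. -/
def mT : Matrix (Fin 2) (Fin 2) ℚ := (1 / 35 : ℚ) • !![6, -1; 1, -6]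

/-- `m_e = (1/35)·[[-1,6],[-6,1]]`. -/
def mE : Matrix (Fin 2) (Fin 2) ℚ := (1 / 35 : ℚ) • !![-1, 6; -6, 1]

/-- The 2×2 block of the 64×64 matrix `M_ρ` in position `(μ, ν)`, for
`μ, ν ∈ P¹(F₃₁)` (`none` is `∞`). -/
def blk : P1 → P1 → Matrix (Fin 2) (Fin 2) ℚ
  | none, none => mB
  | none, some _ => mA
  | some _, none => mE
  | some μ, some ν => if μ = ν then mD else if IsSquare (μ - ν) then mS else mT

/-- The row of `M_ρ` indexed by `(μ, a)`, `μ ∈ P¹(F₃₁)`, `a ∈ Fin 2`. -/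
def rhoRow (μ : P1) (a : Fin 2) : P1 → Fin 2 → ℚ := fun ν b => blk μ ν a b

/-- The standard basis vector of `ℤ⁶⁴ = R³²` indexed by `(μ, a)`. -/
def stdRow (μ : P1) (a : Fin 2) : P1 → Fin 2 → ℚ :=
  fun ν b => if ν = μ ∧ b = a then 1 else 0

/-- The relation that `x ∈ (R∨)³²` projects to the word `w`, as a subgroup of the product. -/
def liftRel : AddSubgroup ((P1 → Fin 2 → ℚ) × (P1 → ZMod 35)) where
  carrier := {z | ∀ ν : P1, ∃ m : ℤ, (m : ZMod 35) = z.2 ν ∧ inRlat (z.1 ν - (m : ℚ) • uvec)}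
  zero_mem' := fun ν => ⟨0, by simp, fun i => ⟨0, by simp⟩⟩
  add_mem' := by
    intro z z' h h' ν
    obtain ⟨m, hm, hx⟩ := h ν
    obtain ⟨m', hm', hx'⟩ := h' ν
    refine ⟨m + m', by simp [hm, hm'], fun i => ?_⟩
    obtain ⟨k, hk⟩ := hx i
    obtain ⟨k', hk'⟩ := hx' i
    refine ⟨k + k', ?_⟩
    simp only [Pi.sub_apply, Pi.smul_apply, smul_eq_mul, Prod.fst_add, Pi.add_apply] at hk hk' ⊢
    push_cast
    linear_combination hk + hk'
  neg_mem' := by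
    intro z h ν
    obtain ⟨m, hm, hx⟩ := h ν
    refine ⟨-m, by simp [hm], fun i => ?_⟩
    obtain ⟨k, hk⟩ := hx i
    refine ⟨-k, ?_⟩
    simp only [Pi.sub_apply, Pi.smul_apply, smul_eq_mul, Prod.fst_neg, Pi.neg_apply] at hk ⊢
    push_cast
    linear_combination -hk

lemma mem_LQ {x : P1 → Fin 2 → ℚ} : x ∈ LQ ↔ ∃ w ∈ Qcode, (x, w) ∈ liftRel := Iff.rfl

/-- The word to which the first row of `M_ρ` indexed by `μ` projects. -/
def wrow : P1 → P1 → ZMod 35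
  | none, none => -12
  | none, some _ => -1
  | some _, none => 1
  | some μ, some ν => if μ = ν then -12 else if IsSquare (μ - ν) then 6 else -6

/-- `(p, q)/35 ≡ -p • u` modulo `R` when `q ≡ -6 p (mod 35)`. -/
lemma exists_lift (x : Fin 2 → ℚ) (c : ZMod 35) (p q k : ℤ) (h0 : x 0 = p / 35)
    (h1 : x 1 = q / 35) (hk : q + 6 * p = 35 * k) (hc : ((-p : ℤ) : ZMod 35) = c) :
    ∃ m : ℤ, (m : ZMod 35) = c ∧ inRlat (x - (m : ℚ) • uvec) := by
  refine ⟨-p, hc, fun i => ?_⟩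
  have hk' : (q : ℚ) + 6 * p = 35 * k := by exact_mod_cast hk
  fin_cases i
  · refine ⟨p, ?_⟩
    simp [uvec, h0]
    ring
  · refine ⟨k, ?_⟩
    simp [uvec, h1]
    linear_combination hk' / 35

lemma rhoRow_zero_lift (μ : P1) : (rhoRow μ 0, wrow μ) ∈ liftRel := by
  intro ν
  rcases μ with _ | μ <;> rcases ν with _ | ν
  · exact exists_lift _ _ 12 (-2) 2 (by norm_num [rhoRow, blk, mB])
      (by norm_num [rhoRow, blk, mB]) (by norm_num) (by decide)
  · exact exists_lift _ _ 1 (-6) 0 (by norm_num [rhoRow, blk, mA])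
      (by norm_num [rhoRow, blk, mA]) (by norm_num) (by simp [wrow])
  · exact exists_lift _ _ (-1) 6 0 (by norm_num [rhoRow, blk, mE])
      (by norm_num [rhoRow, blk, mE]) (by norm_num) (by simp [wrow])
  · by_cases h : μ = ν
    · exact exists_lift _ _ 12 (-2) 2 (by norm_num [rhoRow, blk, mD, h])
        (by norm_num [rhoRow, blk, mD, h]) (by norm_num) (by simp [wrow, h])
    by_cases hs : IsSquare (μ - ν)
    · exact exists_lift _ _ (-6) 1 (-1) (by norm_num [rhoRow, blk, mS, h, hs])
        (by norm_num [rhoRow, blk, mS, h, hs]) (by norm_num) (by simp [wrow, h, hs])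
    · exact exists_lift _ _ 6 (-1) 1 (by norm_num [rhoRow, blk, mT, h, hs])
        (by norm_num [rhoRow, blk, mT, h, hs]) (by norm_num) (by simp [wrow, h, hs])

lemma rhoRow_one_lift (μ : P1) : (rhoRow μ 1, (6 : ℤ) • wrow μ) ∈ liftRel := by
  intro ν
  rcases μ with _ | μ <;> rcases ν with _ | ν
  · exact exists_lift _ _ 2 (-12) 0 (by norm_num [rhoRow, blk, mB])
      (by norm_num [rhoRow, blk, mB]) (by norm_num) (by simp [wrow]; decide)
  · exact exists_lift _ _ 6 (-1) 1 (by norm_num [rhoRow, blk, mA])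
      (by norm_num [rhoRow, blk, mA]) (by norm_num) (by simp [wrow])
  · exact exists_lift _ _ (-6) 1 (-1) (by norm_num [rhoRow, blk, mE])
      (by norm_num [rhoRow, blk, mE]) (by norm_num) (by simp [wrow])
  · by_cases h : μ = ν
    · exact exists_lift _ _ 2 (-12) 0 (by norm_num [rhoRow, blk, mD, h])
        (by norm_num [rhoRow, blk, mD, h]) (by norm_num) (by simp [wrow, h]; decide)
    by_cases hs : IsSquare (μ - ν)
    · exact exists_lift _ _ (-1) 6 0 (by norm_num [rhoRow, blk, mS, h, hs])
        (by norm_num [rhoRow, blk, mS, h, hs]) (by norm_num) (by simp [wrow, h, hs]; decide)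
    · exact exists_lift _ _ 1 (-6) 0 (by norm_num [rhoRow, blk, mT, h, hs])
        (by norm_num [rhoRow, blk, mT, h, hs]) (by norm_num) (by simp [wrow, h, hs]; decide)

lemma stdRow_lift (μ : P1) (a : Fin 2) : (stdRow μ a, 0) ∈ liftRel := by
  intro ν
  refine ⟨0, by simp, fun i => ⟨if ν = μ ∧ i = a then 1 else 0, ?_⟩⟩
  simp [stdRow]

lemma vgen_eq (μ : ZMod 31) :
    vgen μ = (12 : ℤ) • wrow (some μ) - (5 : ℤ) • wrow none := by
  funext ν
  rcases ν with _ | ν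
  · simp [vgen, wrow]
    decide
  · by_cases h : ν = μ
    · simp [vgen, wrow, h]
      decide
    by_cases hs : IsSquare (μ - ν)
    · simp [vgen, wrow, h, Ne.symm h, hs]
      rfl
    · simp [vgen, wrow, h, Ne.symm h, hs]
      decide

lemma wrow_none_eq : wrow none = (19 : ℤ) • ∑ μ, vgen μ := by
  funext ν
  rcases ν with _ | ν
  · simp [vgen, wrow]
    decide
  -- The sum at `ν` depends only on the differences `δ = μ - ν`, so one numerical check suffices.
  · have key : ∑ δ : ZMod 31, (if 0 = δ then (1 : ZMod 35) else if IsSquare δ then 7 else 3)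
        = 11 := by decide +kernel
    have shift : ∑ μ, vgen μ (some ν)
        = ∑ δ : ZMod 31, (if 0 = δ then (1 : ZMod 35) else if IsSquare δ then 7 else 3) :=
      Fintype.sum_equiv (Equiv.subRight ν) _ _ fun μ => by
        simp [vgen, eq_comm, sub_eq_zero]
    simp only [Pi.smul_apply, Finset.sum_apply, shift, key, wrow]
    decide

lemma wrow_some_eq (μ : ZMod 31) :
    wrow (some μ) = (3 : ℤ) • vgen μ + (15 : ℤ) • wrow none := by
  -- `3 * 12 = 36 = 1` modulo 35, and the multiples `-15` and `15` of `wrow ∞` cancel.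
  have h36 : (36 : ℤ) • wrow (some μ) = wrow (some μ) := by
    funext ν
    have : (36 : ZMod 35) = 1 := by decide
    simp [this]
  rw [vgen_eq, smul_sub, smul_smul, smul_smul]
  norm_num [h36]

lemma wrow_mem (μ : P1) : wrow μ ∈ Qcode := by
  have hv (μ) : vgen μ ∈ Qcode := AddSubgroup.subset_closure ⟨μ, rfl⟩
  have hn : wrow none ∈ Qcode := by
    rw [wrow_none_eq]
    exact zsmul_mem (sum_mem fun μ _ => hv μ) _
  rcases μ with _ | μ
  · exact hn
  · rw [wrow_some_eq]
    exact add_mem (zsmul_mem (hv μ) _) (zsmul_mem hn _)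

/-- The kernel of the projection is `ℤ⁶⁴`. -/
lemma exists_int_of_lift_zero {x : P1 → Fin 2 → ℚ} (h : (x, 0) ∈ liftRel) :
    ∃ k : P1 → Fin 2 → ℤ, ∀ ν i, x ν i = k ν i := by
  have : ∀ ν i, ∃ k : ℤ, x ν i = k := by
    intro ν i
    obtain ⟨m, hm, hx⟩ := h ν
    obtain ⟨n, rfl⟩ := (ZMod.intCast_zmod_eq_zero_iff_dvd m 35).1 hm
    obtain ⟨k, hk⟩ := hx i
    fin_cases i
    · refine ⟨k + 34 * n, ?_⟩
      simp [uvec] at hk ⊢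
      linear_combination hk
    · refine ⟨k + 6 * n, ?_⟩
      simp [uvec] at hk ⊢
      linear_combination hk
  choose k hk using this
  exact ⟨k, hk⟩

/-- `L_Q` equals the ℤ-submodule of `ℚ⁶⁴` generated by the 64 standard basis vectors of
`ℤ⁶⁴` together with the 64 rows of the matrix `M_ρ`. -/
theorem stmt_18 :
    LQ = (AddSubgroup.closure
      (Set.range (fun q : P1 × Fin 2 => stdRow q.1 q.2) ∪
       Set.range (fun q : P1 × Fin 2 => rhoRow q.1 q.2)) :
        AddSubgroup (P1 → Fin 2 → ℚ)) := by
  set H := AddSubgroup.closure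
      (Set.range (fun q : P1 × Fin 2 => stdRow q.1 q.2) ∪
       Set.range (fun q : P1 × Fin 2 => rhoRow q.1 q.2)) with hH
  have hstd (μ a) : stdRow μ a ∈ H := AddSubgroup.subset_closure (Or.inl ⟨(μ, a), rfl⟩)
  have hrho (μ a) : rhoRow μ a ∈ H := AddSubgroup.subset_closure (Or.inr ⟨(μ, a), rfl⟩)
  ext x
  rw [mem_LQ, SetLike.mem_coe]
  constructor
  · rintro ⟨w, hw, hx⟩
    obtain ⟨y, hy, hyw⟩ : ∃ y ∈ H, (y, w) ∈ liftRel := by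
      clear hx
      induction hw using AddSubgroup.closure_induction with
      | mem w hw =>
        obtain ⟨μ, rfl⟩ := hw
        refine ⟨(12 : ℤ) • rhoRow (some μ) 0 - (5 : ℤ) • rhoRow none 0,
          sub_mem (zsmul_mem (hrho _ _) _) (zsmul_mem (hrho _ _) _), ?_⟩
        rw [vgen_eq]
        exact sub_mem (zsmul_mem (rhoRow_zero_lift _) 12) (zsmul_mem (rhoRow_zero_lift _) 5)
      | zero => exact ⟨0, zero_mem _, zero_mem liftRel⟩
      | add w w' _ _ h h' =>
        obtain ⟨y, hy, hl⟩ := h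
        obtain ⟨y', hy', hl'⟩ := h'
        exact ⟨y + y', add_mem hy hy', add_mem hl hl'⟩
      | neg w _ h =>
        obtain ⟨y, hy, hl⟩ := h
        exact ⟨-y, neg_mem hy, neg_mem hl⟩
    -- `x` and `y` project to the same word, so they differ by an element of `ℤ⁶⁴`.
    have hd : (x - y, 0) ∈ liftRel := by
      have := sub_mem hx hyw
      rwa [Prod.mk_sub_mk, sub_self] at this
    obtain ⟨k, hk⟩ := exists_int_of_lift_zero hd
    have hsum : x - y = ∑ ν, ∑ i, k ν i • stdRow ν i := by
      funext ν i
      rw [hk]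
      simp only [Finset.sum_apply, Pi.smul_apply, stdRow, ite_and, smul_ite, smul_zero]
      simp
    have : x - y ∈ H := by
      rw [hsum]
      exact sum_mem fun ν _ => sum_mem fun i _ => zsmul_mem (hstd ν i) _
    simpa using add_mem this hy
  · intro hx
    induction hx using AddSubgroup.closure_induction with
    | mem x hx =>
      rcases hx with ⟨⟨μ, a⟩, rfl⟩ | ⟨⟨μ, a⟩, rfl⟩
      · exact ⟨0, zero_mem _, stdRow_lift μ a⟩
      · fin_cases a
        · exact ⟨_, wrow_mem μ, rhoRow_zero_lift μ⟩
        · exact ⟨_, zsmul_mem (wrow_mem μ) 6, rhoRow_one_lift μ⟩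
    | zero => exact ⟨0, zero_mem _, zero_mem liftRel⟩
    | add x x' _ _ h h' =>
      obtain ⟨w, hw, hl⟩ := h
      obtain ⟨w', hw', hl'⟩ := h'
      exact ⟨w + w', add_mem hw hw', add_mem hl hl'⟩
    | neg x _ h =>
      obtain ⟨w, hw, hl⟩ := h
      exact ⟨-w, neg_mem hw, neg_mem hl⟩
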